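/- arXiv:2410.18788 — 2 statements merged into one kernel-verified Lean document; each statement's English description precedes it below -/
import Mathlib

section
/- Let R be an irreducible ADE root system of rank n with chosen positive system R^+, simple roots α_1,…,α_n, fundamental weights ϖ_1,…,ϖ_n, heights h_i = max{ϖ_i·α : α ∈ R}, highest root α̃ = Σᵢ h_i α_i; set α_0 = −α̃, h_0 = 1, ϖ_0 = 0 and I = {0,1,…,n}. For a nonempty subset J ⊂ I, set Q_J = Σ_{i ∈ I∖J} ℤα_i and R_J = {α ∈ R : α ∈ Q_J}. Then {α_i : i ∈ I∖J} is a basis of the root system R_J, and R_J = {α ∈ R : there exists m ∈ {−1,0,1} with ϖ_i·α = m·h_i for all i ∈ J}. -/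
open scoped RealInnerProductSpace BigOperators

noncomputable section

variable {V : Type} [NormedAddCommGroup V] [InnerProductSpace ℝ V] [FiniteDimensional ℝ V]

/-- An `ADE` root system: a finite set of vectors of norm 2 with pairwise integral inner
products, stable under the associated reflections. -/
def IsADE (R : Set V) : Prop :=
  R.Finite ∧ (∀ α ∈ R, ⟪α, α⟫ = 2) ∧ (∀ α ∈ R, ∀ β ∈ R, ∃ k : ℤ, ⟪α, β⟫ = (k : ℝ)) ∧
    ∀ α ∈ R, ∀ β ∈ R, β - ⟪β, α⟫ • α ∈ R

/-- A root system is irreducible if it is nonempty and admits no decomposition as an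
orthogonal disjoint union of two nonempty subsets. -/
def IsIrreducibleRS (R : Set V) : Prop :=
  R.Nonempty ∧ ∀ S T : Set V, R = S ∪ T → (∀ s ∈ S, ∀ t ∈ T, ⟪s, t⟫ = 0) →
    S = ∅ ∨ T = ∅

/-- Extension of an `n`-tuple to an `(n+1)`-tuple by prescribing the value at `0`
(affine index set `I = {0, 1, …, n}`). -/
def ext0 {X : Type} {n : ℕ} (x0 : X) (x : Fin n → X) : Fin (n + 1) → X :=
  Fin.cases x0 x

/-- The affine family of roots `α_0 = -α̃, α_1, …, α_n`, where
`α̃ = Σᵢ hᵢ αᵢ` is the highest root. -/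
def affRoot {n : ℕ} (α : Fin n → V) (h : Fin n → ℕ) : Fin (n + 1) → V :=
  ext0 (-(∑ i, (h i : ℝ) • α i)) α

/-- The sub root system `R_J = R ∩ Q_J`, where `Q_J = Σ_{i ∈ I∖J} ℤ αᵢ`. -/
def RJ {n : ℕ} (R : Set V) (α : Fin n → V) (h : Fin n → ℕ) (J : Finset (Fin (n + 1))) :
    Set V :=
  {β ∈ R | β ∈ AddSubgroup.closure (affRoot α h '' {i | i ∉ J})}

/-- **Lemma (sub root systems from the affine diagram)**. Let `R` be an irreducible ADE
root system of rank `n`, with simple roots `α_i` (of a positive system), fundamental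
weights `ϖ_i`, heights `h_i`, highest root `α̃ = Σ h_i α_i`; set `α_0 = -α̃`, `h_0 = 1`,
`ϖ_0 = 0`. For a nonempty `J ⊆ {0,…,n}`, the family `{α_i : i ∉ J}` is a basis of the
root system `R_J = R ∩ Σ_{i∉J} ℤα_i`, and
`R_J = {α ∈ R : ∃ m ∈ {-1,0,1}, ∀ i ∈ J, ⟪ϖ_i, α⟫ = m·h_i}`. -/
theorem affine_sub_root_system {n : ℕ} (R : Set V)
    (hADE : IsADE R) (hirr : IsIrreducibleRS R)
    (hrank : Module.finrank ℝ (Submodule.span ℝ R) = n)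
    (α : Fin n → V) (hαR : ∀ i, α i ∈ R)
    (hli : LinearIndependent ℝ α)
    (hspan : R ⊆ (Submodule.span ℝ (Set.range α) : Set V))
    (hpos : ∀ β ∈ R, (∃ c : Fin n → ℕ, β = ∑ i, (c i : ℝ) • α i) ∨
      (∃ c : Fin n → ℕ, β = -(∑ i, (c i : ℝ) • α i)))
    (ϖ : Fin n → V) (hϖ : ∀ i j, ⟪ϖ i, α j⟫ = if i = j then 1 else 0)
    (h : Fin n → ℕ) (hh : ∀ i, IsGreatest ((fun β => ⟪ϖ i, β⟫) '' R) ((h i : ℝ)))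
    (hhighest : (∑ i, (h i : ℝ) • α i) ∈ R)
    (J : Finset (Fin (n + 1))) (hJ : J.Nonempty) :
    -- the α_i, i ∉ J, are roots of R_J …
    (∀ i ∉ J, affRoot α h i ∈ RJ R α h J) ∧
    -- … linearly independent …
    LinearIndependent ℝ (fun i : {i : Fin (n + 1) // i ∉ J} => affRoot α h i.1) ∧
    -- … spanning the span of R_J …
    Submodule.span ℝ (Set.range fun i : {i : Fin (n + 1) // i ∉ J} => affRoot α h i.1) =
      Submodule.span ℝ (RJ R α h J) ∧
    -- … and every root of R_J is a combination of them with coefficients all of the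
    -- same sign (so they form a basis of the root system R_J) ;
    (∀ β ∈ RJ R α h J,
      (∃ c : Fin (n + 1) → ℕ, (∀ j ∈ J, c j = 0) ∧ β = ∑ i, (c i : ℝ) • affRoot α h i) ∨
      (∃ c : Fin (n + 1) → ℕ, (∀ j ∈ J, c j = 0) ∧
        β = -(∑ i, (c i : ℝ) • affRoot α h i))) ∧
    -- description of R_J by the fundamental weights
    RJ R α h J =
      {β ∈ R | ∃ m : ℤ, (m = -1 ∨ m = 0 ∨ m = 1) ∧
        ∀ i ∈ J, ⟪ext0 (0 : V) ϖ i, β⟫ = (m : ℝ) * ((ext0 1 h i : ℕ) : ℝ)} := by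
  obtain ⟨-, hnorm, -, hrefl⟩ := hADE
  have hinner : ∀ (i : Fin n) (c : Fin n → ℝ), ⟪ϖ i, ∑ j, c j • α j⟫ = c i := by
    intro i c
    simp [inner_sum, inner_smul_right, hϖ]
  have hneg : ∀ β ∈ R, -β ∈ R := by
    intro β hβ
    have h1 := hrefl β hβ β hβ
    rw [hnorm β hβ] at h1
    have h2 : β - (2 : ℝ) • β = -β := by module
    rwa [h2] at h1
  have hle : ∀ β ∈ R, ∀ i, ⟪ϖ i, β⟫ ≤ (h i : ℝ) := fun β hβ i => (hh i).2 ⟨β, hβ, rfl⟩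
  have hge : ∀ β ∈ R, ∀ i, -(h i : ℝ) ≤ ⟪ϖ i, β⟫ := by
    intro β hβ i
    have h1 := hle _ (hneg β hβ) i
    rw [inner_neg_right] at h1
    linarith
  have hone : ∀ i, (1 : ℝ) ≤ h i := by
    intro i
    have h1 := hle _ (hαR i) i
    simpa [hϖ] using h1
  have hroot0 : affRoot α h 0 = -(∑ i, (h i : ℝ) • α i) := rfl
  have hrootS : ∀ i : Fin n, affRoot α h i.succ = α i := fun i => rfl
  have hw0 : ext0 (0 : V) ϖ 0 = 0 := rfl
  have hwS : ∀ i : Fin n, ext0 (0 : V) ϖ i.succ = ϖ i := fun i => rfl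
  have hh0 : (ext0 1 h 0 : ℕ) = 1 := rfl
  have hhS : ∀ i : Fin n, (ext0 1 h i.succ : ℕ) = h i := fun i => rfl
  have hrootR : ∀ i, affRoot α h i ∈ R := by
    intro i
    refine Fin.cases ?_ (fun i => ?_) i
    · rw [hroot0]; exact hneg _ hhighest
    · rw [hrootS]; exact hαR i
  -- membership in the lattice gives the level
  have hA0 : ∀ β ∈ AddSubgroup.closure (affRoot α h '' {i | i ∉ J}), ∃ m : ℤ,
      ∀ i ∈ J, ⟪ext0 (0 : V) ϖ i, β⟫ = (m : ℝ) * ((ext0 1 h i : ℕ) : ℝ) := by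
    intro β hβ
    induction hβ using AddSubgroup.closure_induction with
    | mem x hx =>
      obtain ⟨k, hk, rfl⟩ := hx
      replace hk : k ∉ J := hk
      revert hk
      refine Fin.cases ?_ (fun k => ?_) k
      · intro hk
        refine ⟨-1, fun i => ?_⟩
        refine Fin.cases ?_ (fun i => ?_) i
        · intro hi; exact absurd hi hk
        · intro hi
          rw [hwS, hhS, hroot0, inner_neg_right, hinner]
          simp
      · intro hk
        refine ⟨0, fun i => ?_⟩
        refine Fin.cases ?_ (fun i => ?_) i
        · intro hi; simp [hw0]
        · intro hi
          have hik : i ≠ k := by rintro rfl; exact hk hi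
          rw [hwS, hrootS, hϖ]
          simp [hik]
    | zero => exact ⟨0, by simp⟩
    | add x y _ _ hx hy =>
      obtain ⟨a, ha⟩ := hx
      obtain ⟨b, hb⟩ := hy
      refine ⟨a + b, fun i hi => ?_⟩
      rw [inner_add_right, ha i hi, hb i hi]
      push_cast; ring
    | neg x _ hx =>
      obtain ⟨a, ha⟩ := hx
      refine ⟨-a, fun i hi => ?_⟩
      rw [inner_neg_right, ha i hi]
      push_cast; ring
  have hA : ∀ β ∈ RJ R α h J, ∃ m : ℤ, (m = -1 ∨ m = 0 ∨ m = 1) ∧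
      ∀ i ∈ J, ⟪ext0 (0 : V) ϖ i, β⟫ = (m : ℝ) * ((ext0 1 h i : ℕ) : ℝ) := by
    rintro β ⟨hβR, hβ⟩
    obtain ⟨m, hm⟩ := hA0 β hβ
    refine ⟨m, ?_, hm⟩
    obtain ⟨j, hj⟩ := hJ
    have hj2 := hm j hj
    revert hj2
    refine Fin.cases ?_ (fun i => ?_) j
    · intro hj2
      rw [hw0, hh0] at hj2
      simp at hj2
      exact Or.inr (Or.inl (by exact_mod_cast hj2.symm))
    · intro hj2
      rw [hwS, hhS] at hj2
      have h1 := hle β hβR i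
      have h2 := hge β hβR i
      have h3 := hone i
      rw [hj2] at h1 h2
      have h4 : (m : ℝ) ≤ 1 := by nlinarith
      have h5 : (-1 : ℝ) ≤ m := by nlinarith
      have h6 : m ≤ 1 := by exact_mod_cast h4
      have h7 : -1 ≤ m := by exact_mod_cast h5
      omega
  -- coordinates of the roots are integers
  have hint : ∀ β ∈ R, ∃ d : Fin n → ℤ, β = ∑ i, (d i : ℝ) • α i := by
    intro β hβ
    rcases hpos β hβ with ⟨c, hc⟩ | ⟨c, hc⟩
    · exact ⟨fun i => (c i : ℤ), by simpa using hc⟩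
    · exact ⟨fun i => -(c i : ℤ), by simpa using hc⟩
  have hB : ∀ β ∈ R, (∃ m : ℤ, (m = -1 ∨ m = 0 ∨ m = 1) ∧
      ∀ i ∈ J, ⟪ext0 (0 : V) ϖ i, β⟫ = (m : ℝ) * ((ext0 1 h i : ℕ) : ℝ)) →
      (∃ c : Fin (n + 1) → ℕ, (∀ j ∈ J, c j = 0) ∧ β = ∑ i, (c i : ℝ) • affRoot α h i) ∨
      (∃ c : Fin (n + 1) → ℕ, (∀ j ∈ J, c j = 0) ∧
        β = -(∑ i, (c i : ℝ) • affRoot α h i)) := by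
    -- the level `-1` case
    have key : ∀ β ∈ R, (∀ i ∈ J, ⟪ext0 (0 : V) ϖ i, β⟫ =
        ((-1 : ℤ) : ℝ) * ((ext0 1 h i : ℕ) : ℝ)) →
        ∃ c : Fin (n + 1) → ℕ, (∀ j ∈ J, c j = 0) ∧
          β = ∑ i, (c i : ℝ) • affRoot α h i := by
      intro β hβ hm
      obtain ⟨d, hd⟩ := hint β hβ
      have hdi : ∀ i, ⟪ϖ i, β⟫ = (d i : ℝ) := fun i => by rw [hd, hinner]
      have hnn : ∀ i, 0 ≤ (h i : ℤ) + d i := by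
        intro i
        have h1 := hge β hβ i
        rw [hdi] at h1
        have h2 : (0 : ℝ) ≤ ((h i : ℤ) + d i : ℤ) := by push_cast; linarith
        exact_mod_cast h2
      have hcast : ∀ i, ((((h i : ℤ) + d i).toNat : ℕ) : ℝ) = (h i : ℝ) + d i := by
        intro i
        have h1 : ((((h i : ℤ) + d i).toNat : ℤ) : ℝ) = (((h i : ℤ) + d i : ℤ) : ℝ) := by
          rw [Int.toNat_of_nonneg (hnn i)]
        push_cast at h1
        exact_mod_cast h1
      refine ⟨Fin.cases 1 (fun i => ((h i : ℤ) + d i).toNat), fun j => ?_, ?_⟩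
      · refine Fin.cases ?_ (fun i => ?_) j
        · intro hj
          have h1 := hm 0 hj
          rw [hw0, hh0] at h1
          simp at h1
        · intro hj
          have h1 := hm _ hj
          rw [hwS, hhS, hdi] at h1
          have h2 : d i = -(h i : ℤ) := by
            push_cast at h1
            have h3 : (d i : ℝ) = ((-(h i : ℤ) : ℤ) : ℝ) := by push_cast; linarith
            exact_mod_cast h3
          simp [h2]
      · rw [Fin.sum_univ_succ]
        simp only [Fin.cases_zero, Fin.cases_succ, hroot0, hrootS, hcast, add_smul,
          Finset.sum_add_distrib]
        rw [← hd]
        simp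
    rintro β hβ ⟨m, hm | hm | hm, hmJ⟩
    · subst hm
      exact Or.inl (key β hβ hmJ)
    · subst hm
      have aux : ∀ (c : Fin n → ℕ), (∀ i, ⟪ϖ i, β⟫ = c i ∨ ⟪ϖ i, β⟫ = -(c i : ℝ)) →
          ∀ j ∈ J, (Fin.cases 0 c j : ℕ) = 0 := by
        intro c hc j
        refine Fin.cases ?_ (fun i => ?_) j
        · intro _; rfl
        · intro hj
          have h1 := hmJ _ hj
          rw [hwS] at h1
          have h2 : (c i : ℝ) = 0 := by
            rcases hc i with h3 | h3 <;> rw [h3] at h1 <;> simpa using h1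
          simpa using h2
      rcases hpos β hβ with ⟨c, hc⟩ | ⟨c, hc⟩
      · refine Or.inl ⟨Fin.cases 0 c, aux c fun i => Or.inl (by rw [hc, hinner]), ?_⟩
        rw [Fin.sum_univ_succ]
        simpa [hrootS] using hc
      · refine Or.inr ⟨Fin.cases 0 c,
          aux c fun i => Or.inr (by rw [hc, inner_neg_right, hinner]), ?_⟩
        rw [Fin.sum_univ_succ]
        simpa [hrootS] using hc
    · subst hm
      obtain ⟨c, hc, hβc⟩ := key (-β) (hneg β hβ) (fun i hi => by
        rw [inner_neg_right, hmJ i hi]; push_cast; ring)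
      exact Or.inr ⟨c, hc, by rw [← hβc, neg_neg]⟩
  have hC0 : ∀ c : Fin (n + 1) → ℕ, (∀ j ∈ J, c j = 0) →
      ∑ i, (c i : ℝ) • affRoot α h i ∈ AddSubgroup.closure (affRoot α h '' {i | i ∉ J}) := by
    intro c hc
    refine AddSubgroup.sum_mem _ fun i _ => ?_
    by_cases hi : i ∈ J
    · rw [hc i hi]; simp
    · rw [Nat.cast_smul_eq_nsmul]
      have hmem : affRoot α h i ∈ AddSubgroup.closure (affRoot α h '' {i | i ∉ J}) :=
        AddSubgroup.subset_closure ⟨i, hi, rfl⟩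
      exact AddSubgroup.nsmul_mem _ hmem _
  have h1 : ∀ i ∉ J, affRoot α h i ∈ RJ R α h J := fun i hi =>
    ⟨hrootR i, AddSubgroup.subset_closure ⟨i, hi, rfl⟩⟩
  refine ⟨h1, ?_, ?_, fun β hβ => hB β hβ.1 (hA β hβ), ?_⟩
  · rw [Fintype.linearIndependent_iff]
    intro g hg
    let G : Fin (n + 1) → ℝ := fun i => if hi : i ∉ J then g ⟨i, hi⟩ else 0
    have hGJ : ∀ j ∈ J, G j = 0 := fun j hj => by simp [G, hj]
    have hGg : ∀ i : {i : Fin (n + 1) // i ∉ J}, G i.1 = g i := fun i => by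
      simp [G, i.2]
    have hsum : ∑ i, G i • affRoot α h i = 0 := by
      rw [← hg, ← Fintype.sum_subtype_add_sum_subtype (fun i => i ∉ J)
        (fun i => G i • affRoot α h i)]
      have e2 : ∑ i : {i : Fin (n + 1) // ¬ i ∉ J}, G i.1 • affRoot α h i.1 = 0 :=
        Finset.sum_eq_zero fun i _ => by rw [hGJ _ (not_not.mp i.2), zero_smul]
      rw [e2, add_zero]
      exact Finset.sum_congr rfl fun i _ => by rw [hGg]
    have hS : ∀ i : Fin n, G i.succ = G 0 * h i := by
      intro i
      have h2 := congrArg (fun v => ⟪ϖ i, v⟫) hsum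
      rw [Fin.sum_univ_succ] at h2
      simp only [hroot0, hrootS, inner_add_right, inner_smul_right, inner_neg_right, hinner,
        inner_zero_right] at h2
      linarith
    have hG0 : G 0 = 0 := by
      obtain ⟨j, hj⟩ := hJ
      have h2 := hGJ j hj
      revert h2
      refine Fin.cases (fun h2 => h2) (fun i h2 => ?_) j
      rw [hS] at h2
      have h3 := hone i
      rcases mul_eq_zero.mp h2 with h4 | h4
      · exact h4
      · linarith
    have hall : ∀ i, G i = 0 := by
      intro i
      refine Fin.cases hG0 (fun i => ?_) i
      rw [hS, hG0, zero_mul]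
    intro i
    rw [← hGg, hall]
  · apply le_antisymm
    · rw [Submodule.span_le]
      rintro _ ⟨i, rfl⟩
      exact Submodule.subset_span (h1 i.1 i.2)
    · rw [Submodule.span_le]
      rintro β ⟨-, hβ⟩
      have hsub : AddSubgroup.closure (affRoot α h '' {i | i ∉ J}) ≤ (Submodule.span ℝ
          (Set.range fun i : {i : Fin (n + 1) // i ∉ J} => affRoot α h i.1)).toAddSubgroup := by
        rw [AddSubgroup.closure_le]
        rintro _ ⟨i, hi, rfl⟩
        exact Submodule.subset_span ⟨⟨i, hi⟩, rfl⟩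
      exact hsub hβ
  · ext β
    constructor
    · intro hβ
      exact ⟨hβ.1, hA β hβ⟩
    · rintro ⟨hβR, hβ⟩
      refine ⟨hβR, ?_⟩
      rcases hB β hβR hβ with ⟨c, hc, hβc⟩ | ⟨c, hc, hβc⟩
      · rw [hβc]; exact hC0 c hc
      · rw [hβc]; exact AddSubgroup.neg_mem _ (hC0 c hc)

end
end

section
/- Let R be an irreducible ADE root system of rank n, with notation α_i, ϖ_i, h_i (0 ≤ i ≤ n), I = {0,…,n} and R_J (for J ⊂ I) as in the classical affine setup, and let W(R) be its Weyl group. For an integer d ≥ 1, the d-kernels of R are exactly the sub root systems of the form w(R_J), where w ∈ W(R) and J ⊂ I is a subset for which there exist integers x_j > 0 (j ∈ J) with Σ_{j∈J} x_j h_j = d and gcd(d, {x_j : j ∈ J}) = 1. -/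
open scoped RealInnerProductSpace BigOperators

noncomputable section

variable {V : Type} [NormedAddCommGroup V] [InnerProductSpace ℝ V] [FiniteDimensional ℝ V]

/-- The Weyl group `W(R)` : the group of isometries generated by the reflections
`s_α : v ↦ v - (v·α)α`, `α ∈ R`. -/
def WeylGrp (R : Set V) : Subgroup (V ≃ₗᵢ[ℝ] V) :=
  Subgroup.closure {g | ∃ α ∈ R, ∀ v, g v = v - ⟪v, α⟫ • α}

/-- `R'` is a `d`-kernel of the root system `R` : there is a surjective linear map
`φ : Q(R) → ℤ/dℤ` with `R_2(ker φ) = R'`, where `Q(R)` is the root lattice generated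
by `R`. -/
def IsDKernelOfRS (d : ℕ) (R R' : Set V) : Prop :=
  ∃ φ : ↥(AddSubgroup.closure R) →+ ZMod d, Function.Surjective φ ∧
    {v : V | ∃ hv : v ∈ AddSubgroup.closure R, φ ⟨v, hv⟩ = 0 ∧ ⟪v, v⟫ = 2} = R'


namespace DKer

lemma neg_mem {R : Set V} (hADE : IsADE R) {β : V} (hβ : β ∈ R) : -β ∈ R := by
  have h1 := hADE.2.2.2 β hβ β hβ
  rw [hADE.2.1 β hβ] at h1
  have : β - (2 : ℝ) • β = -β := by module
  rwa [this] at h1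

lemma root_coords {n : ℕ} {R : Set V} {α : Fin n → V}
    (hpos : ∀ β ∈ R, (∃ c : Fin n → ℕ, β = ∑ i, (c i : ℝ) • α i) ∨
      (∃ c : Fin n → ℕ, β = -(∑ i, (c i : ℝ) • α i))) {v : V}
    (hv : v ∈ AddSubgroup.closure R) : ∃ c : Fin n → ℤ, v = ∑ i, (c i : ℝ) • α i := by
  induction hv using AddSubgroup.closure_induction with
  | mem x hx =>
    rcases hpos x hx with ⟨c, hc⟩ | ⟨c, hc⟩
    · exact ⟨fun i => c i, by simpa using hc⟩
    · exact ⟨fun i => -(c i : ℤ), by simpa using hc⟩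
  | zero => exact ⟨0, by simp⟩
  | add x y _ _ hx hy =>
    obtain ⟨c, rfl⟩ := hx
    obtain ⟨e, rfl⟩ := hy
    exact ⟨c + e, by simp [add_smul, Finset.sum_add_distrib]⟩
  | neg x _ hx =>
    obtain ⟨c, rfl⟩ := hx
    exact ⟨-c, by simp⟩

lemma closure_int {R : Set V} {y : V} (hy : ∀ β ∈ R, ∃ k : ℤ, ⟪y, β⟫ = (k : ℝ)) {v : V}
    (hv : v ∈ AddSubgroup.closure R) : ∃ k : ℤ, ⟪y, v⟫ = (k : ℝ) := by
  induction hv using AddSubgroup.closure_induction with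
  | mem x hx => exact hy x hx
  | zero => exact ⟨0, by simp⟩
  | add a b _ _ ha hb =>
    obtain ⟨k, hk⟩ := ha
    obtain ⟨l, hl⟩ := hb
    exact ⟨k + l, by rw [inner_add_right, hk, hl]; push_cast; ring⟩
  | neg x _ hx =>
    obtain ⟨k, hk⟩ := hx
    exact ⟨-k, by rw [inner_neg_right, hk]; push_cast; ring⟩

lemma inner_pm {a b : V} (ha : ⟪a, a⟫ = 2) (hb : ⟪b, b⟫ = 2) :
    (⟪a, b⟫ ≤ 2) ∧ (-2 ≤ ⟪a, b⟫) ∧ (⟪a, b⟫ = 2 → a = b) ∧ (⟪a, b⟫ = -2 → a = -b) := by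
  have h1 : ⟪a - b, a - b⟫ = 4 - 2 * ⟪a, b⟫ := by
    rw [inner_sub_left, inner_sub_right, inner_sub_right, ha, hb, real_inner_comm a b]; ring
  have h2 : ⟪a + b, a + b⟫ = 4 + 2 * ⟪a, b⟫ := by
    rw [inner_add_left, inner_add_right, inner_add_right, ha, hb, real_inner_comm a b]; ring
  have h3 : 0 ≤ ⟪a - b, a - b⟫ := real_inner_self_nonneg
  have h4 : 0 ≤ ⟪a + b, a + b⟫ := real_inner_self_nonneg
  refine ⟨by linarith, by linarith, fun h => ?_, fun h => ?_⟩
  · have : ⟪a - b, a - b⟫ = 0 := by rw [h1, h]; ring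
    exact sub_eq_zero.1 (inner_self_eq_zero.1 this)
  · have : ⟪a + b, a + b⟫ = 0 := by rw [h2, h]; ring
    exact eq_neg_of_add_eq_zero_left (inner_self_eq_zero.1 this)

/-- Vectors of norm two in the root lattice are roots. -/
lemma norm_two_mem {n : ℕ} {R : Set V} (hADE : IsADE R) {α : Fin n → V} (hαR : ∀ i, α i ∈ R) :
    ∀ (N : ℕ) (c : Fin n → ℤ), (∑ i, (c i).natAbs) ≤ N →
      ⟪∑ i, (c i : ℝ) • α i, ∑ i, (c i : ℝ) • α i⟫ = 2 → ∑ i, (c i : ℝ) • α i ∈ R := by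
  intro N
  induction N with
  | zero =>
    intro c hc hv
    have : ∀ i, c i = 0 := by
      intro i
      have := (Finset.sum_eq_zero_iff.1 (Nat.le_zero.1 hc)) i (Finset.mem_univ i)
      simpa using this
    simp [this] at hv
  | succ N ih =>
    intro c hc hv
    set v := ∑ i, (c i : ℝ) • α i with hvdef
    have hsum : ∑ i, (c i : ℝ) * ⟪v, α i⟫ = 2 := by
      rw [← hv]
      conv_rhs => rw [hvdef]
      rw [← hvdef, hvdef, inner_sum]
      simp only [inner_smul_right]
    obtain ⟨i, hi⟩ : ∃ i, 0 < (c i : ℝ) * ⟪v, α i⟫ := by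
      by_contra hcon
      push Not at hcon
      have := Finset.sum_nonpos (fun i (_ : i ∈ Finset.univ) => hcon i)
      linarith
    obtain ⟨k, hk⟩ : ∃ k : ℤ, ⟪v, α i⟫ = (k : ℝ) := by
      have : ∀ j, ∃ k : ℤ, ⟪α j, α i⟫ = (k : ℝ) := fun j => hADE.2.2.1 _ (hαR j) _ (hαR i)
      choose m hm using this
      refine ⟨∑ j, c j * m j, ?_⟩
      rw [hvdef, sum_inner]
      push_cast
      exact Finset.sum_congr rfl fun j _ => by rw [real_inner_smul_left, hm]
    obtain ⟨b1, b2, b3, b4⟩ := inner_pm hv (hADE.2.1 _ (hαR i))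
    rw [hk] at hi b1 b2 b3 b4
    by_cases h2 : k = 2
    · rw [b3 (by rw [h2]; norm_num)]; exact hαR i
    by_cases hm2 : k = -2
    · rw [b4 (by rw [hm2]; norm_num)]; exact neg_mem hADE (hαR i)
    have hi' : 0 < c i * k := by exact_mod_cast hi
    have b1' : k ≤ 2 := by exact_mod_cast b1
    have b2' : -2 ≤ k := by exact_mod_cast b2
    have hk0 : k ≠ 0 := by rintro rfl; simp at hi'
    have hk1 : k = 1 ∨ k = -1 := by omega
    let c' : Fin n → ℤ := Function.update c i (c i - k)
    have hv' : ∑ j, (c' j : ℝ) • α j = v - (k : ℝ) • α i := by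
      have : ∀ j, (c' j : ℝ) • α j = (c j : ℝ) • α j - (if j = i then (k : ℝ) • α i else 0) := by
        intro j
        by_cases hj : j = i
        · subst hj; simp [c', sub_smul]
        · simp [c', hj]
      simp only [this, Finset.sum_sub_distrib]
      simp [hvdef]
    have hN : ∑ j, (c' j).natAbs ≤ N := by
      have hlt : ∑ j, (c' j).natAbs < ∑ j, (c j).natAbs := by
        apply Finset.sum_lt_sum
        · intro j _
          by_cases hj : j = i
          · subst hj
            simp only [c', Function.update_self]
            rcases hk1 with rfl | rfl <;> omega
          · simp [c', hj]
        · refine ⟨i, Finset.mem_univ _, ?_⟩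
          simp only [c', Function.update_self]
          rcases hk1 with rfl | rfl <;> omega
      omega
    have hkk : (k : ℝ) * k = 1 := by rcases hk1 with rfl | rfl <;> norm_num
    have hnorm : ⟪v - (k : ℝ) • α i, v - (k : ℝ) • α i⟫ = 2 := by
      rw [inner_sub_left, inner_sub_right, inner_sub_right, hv, real_inner_smul_left,
        real_inner_smul_left, inner_smul_right, inner_smul_right, hADE.2.1 _ (hαR i),
        real_inner_comm v (α i), hk]
      ring
    have hmem := ih c' hN (by rw [hv']; exact hnorm)
    rw [hv'] at hmem
    have hr := hADE.2.2.2 (α i) (hαR i) _ hmem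
    rw [inner_sub_left, real_inner_smul_left, hADE.2.1 _ (hαR i), hk] at hr
    have : v - (k : ℝ) • α i - ((k : ℝ) - k * 2) • α i = v := by module
    rwa [this] at hr

lemma exists_refl {R : Set V} (hADE : IsADE R) {a : V} (ha : a ∈ R) :
    ∃ g ∈ WeylGrp R, ∀ v, g v = v - ⟪v, a⟫ • a := by
  have key : ∀ v, (Submodule.reflection (Submodule.span ℝ {a})ᗮ) v = v - ⟪v, a⟫ • a := by
    intro v
    have hn : ‖a‖ ^ 2 = 2 := by rw [← real_inner_self_eq_norm_sq]; exact hADE.2.1 a ha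
    rw [Submodule.reflection_orthogonal_apply, Submodule.reflection_singleton_apply]
    simp only [RCLike.ofReal_real_eq_id, id]
    rw [hn, real_inner_comm a v]
    module
  exact ⟨_, Subgroup.subset_closure ⟨a, ha, key⟩, key⟩

lemma weyl_root {R : Set V} (hADE : IsADE R) {w : V ≃ₗᵢ[ℝ] V} (hw : w ∈ WeylGrp R) :
    ∀ β, w β ∈ R ↔ β ∈ R := by
  induction hw using Subgroup.closure_induction with
  | mem g hg =>
    obtain ⟨a, ha, hg⟩ := hg
    have h1 : ∀ β ∈ R, g β ∈ R := fun β hβ => by rw [hg]; exact hADE.2.2.2 a ha β hβ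
    intro β
    refine ⟨fun hβ => ?_, h1 β⟩
    have h2 := h1 _ hβ
    have : g (g β) = β := by
      rw [hg (g β), hg β, inner_sub_left, real_inner_smul_left, hADE.2.1 a ha]
      module
    rwa [this] at h2
  | one => intro β; rfl
  | mul x y _ _ hx hy => exact fun β => (hx (y β)).trans (hy β)
  | inv x _ hx =>
    intro β
    rw [← hx]
    have : x (x⁻¹ β) = β := LinearIsometryEquiv.apply_symm_apply x β
    rw [this]

lemma step_translate {R : Set V} (hADE : IsADE R) (d : ℕ) (hd : 1 ≤ d) :
    ∀ (N : ℕ) (y : V), (∀ β ∈ R, ∃ k : ℤ, ⟪y, β⟫ = (k : ℝ)) → ⟪y, y⟫ < N →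
      ∃ z : V, (∀ β ∈ R, ⟪z, β⟫ ≤ d) ∧ ∀ β ∈ R, ∃ k : ℤ, ⟪z, β⟫ = ⟪y, β⟫ + d * k := by
  intro N
  induction N with
  | zero =>
    intro y _ hlt
    have : 0 ≤ ⟪y, y⟫ := real_inner_self_nonneg
    rw [Nat.cast_zero] at hlt
    linarith
  | succ N ih =>
    intro y hy hlt
    by_cases hb : ∀ β ∈ R, ⟪y, β⟫ ≤ d
    · exact ⟨y, hb, fun β _ => ⟨0, by simp⟩⟩
    push Not at hb
    obtain ⟨β, hβ, hlt'⟩ := hb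
    have hd' : (1 : ℝ) ≤ d := by exact_mod_cast hd
    have hge : (d : ℝ) + 1 ≤ ⟪y, β⟫ := by
      obtain ⟨k, hk⟩ := hy β hβ
      rw [hk] at hlt' ⊢
      have : (d : ℤ) < k := by exact_mod_cast hlt'
      exact_mod_cast this
    have hin : ∀ γ ∈ R, ∃ k : ℤ, ⟪y - (d : ℝ) • β, γ⟫ = ⟪y, γ⟫ + d * k := by
      intro γ hγ
      obtain ⟨l, hl⟩ := hADE.2.2.1 β hβ γ hγ
      exact ⟨-l, by rw [inner_sub_left, real_inner_smul_left, hl]; push_cast; ring⟩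
    obtain ⟨z, hz1, hz2⟩ := ih (y - (d : ℝ) • β) (by
      intro γ hγ
      obtain ⟨k, hk⟩ := hy γ hγ
      obtain ⟨l, hl⟩ := hin γ hγ
      exact ⟨k + d * l, by rw [hl, hk]; push_cast; ring⟩) (by
      rw [inner_sub_left, inner_sub_right, inner_sub_right, real_inner_smul_left,
        real_inner_smul_left, inner_smul_right, inner_smul_right, hADE.2.1 _ hβ,
        real_inner_comm y β]
      push_cast at hlt
      nlinarith)
    refine ⟨z, hz1, fun γ hγ => ?_⟩
    obtain ⟨k, hk⟩ := hz2 γ hγ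
    obtain ⟨l, hl⟩ := hin γ hγ
    exact ⟨k + l, by rw [hk, hl]; push_cast; ring⟩

lemma step_weyl {n : ℕ} {R : Set V} (hADE : IsADE R) {α : Fin n → V} (hαR : ∀ i, α i ∈ R)
    (ρ : V) (hρ : ∀ i, ⟪ρ, α i⟫ = 1) :
    ∀ (N : ℕ) (z : V), (∀ β ∈ R, ∃ k : ℤ, ⟪z, β⟫ = (k : ℝ)) → ‖z‖ * ‖ρ‖ - ⟪z, ρ⟫ < N →
      ∃ w ∈ WeylGrp R, ∀ i, 0 ≤ ⟪w z, α i⟫ := by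
  intro N
  induction N with
  | zero =>
    intro z _ hlt
    have := real_inner_le_norm z ρ
    norm_num at hlt
    linarith
  | succ N ih =>
    intro z hz hlt
    by_cases hb : ∀ i, 0 ≤ ⟪z, α i⟫
    · exact ⟨1, one_mem _, hb⟩
    push Not at hb
    obtain ⟨i, hi⟩ := hb
    have hle : ⟪z, α i⟫ ≤ -1 := by
      obtain ⟨k, hk⟩ := hz _ (hαR i)
      rw [hk] at hi ⊢
      have : k < 0 := by exact_mod_cast hi
      have : k ≤ -1 := by omega
      exact_mod_cast this
    obtain ⟨g, hg, hgv⟩ := exists_refl hADE (hαR i)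
    obtain ⟨w, hw, hwz⟩ := ih (g z) (by
      intro γ hγ
      obtain ⟨k, hk⟩ := hz _ hγ
      obtain ⟨l, hl⟩ := hz _ (hαR i)
      obtain ⟨m, hm⟩ := hADE.2.2.1 _ (hαR i) γ hγ
      exact ⟨k - l * m, by
        rw [hgv, inner_sub_left, real_inner_smul_left, hk, hl, hm]; push_cast; ring⟩) (by
      rw [LinearIsometryEquiv.norm_map, hgv, inner_sub_left, real_inner_smul_left,
        real_inner_comm ρ (α i), hρ]
      push_cast at hlt
      linarith)
    exact ⟨w * g, mul_mem hw hg, hwz⟩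

/-- Main computation: the roots on which an alcove point takes values divisible by `d`. -/
lemma alcove_kernel {n : ℕ} {R : Set V} {α : Fin n → V}
    (hpos : ∀ β ∈ R, (∃ c : Fin n → ℕ, β = ∑ i, (c i : ℝ) • α i) ∨
      (∃ c : Fin n → ℕ, β = -(∑ i, (c i : ℝ) • α i)))
    {ϖ : Fin n → V} (hϖ : ∀ i j, ⟪ϖ i, α j⟫ = if i = j then 1 else 0)
    {h : Fin n → ℕ} (hh : ∀ i, IsGreatest ((fun β => ⟪ϖ i, β⟫) '' R) ((h i : ℝ)))
    (hADE : IsADE R)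
    {d : ℕ} {J : Finset (Fin (n + 1))} {X : Fin (n + 1) → ℕ} (hX : ∀ j, X j ≠ 0 ↔ j ∈ J)
    (hsum : ∑ j, X j * ext0 1 h j = d) {y : V} (hy : ∀ i : Fin n, ⟪y, α i⟫ = X i.succ)
    {β : V} (hβ : β ∈ R) : (∃ k : ℤ, ⟪y, β⟫ = d * k) ↔ β ∈ RJ R α h J := by
  have hsum' : X 0 + ∑ i : Fin n, X i.succ * h i = d := by
    rw [Fin.sum_univ_succ] at hsum
    simpa [ext0] using hsum
  have hsumR : (X 0 : ℝ) + ∑ i : Fin n, (X i.succ : ℝ) * h i = d := by exact_mod_cast hsum'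
  have hyin : ∀ c : Fin n → ℕ, ⟪y, ∑ i, (c i : ℝ) • α i⟫ = ((∑ i, X i.succ * c i : ℕ) : ℝ) := by
    intro c
    rw [inner_sum]
    push_cast
    exact Finset.sum_congr rfl fun i _ => by rw [inner_smul_right, hy, mul_comm]
  constructor
  · -- it is enough to treat positive roots
    have main : ∀ c : Fin n → ℕ, (∑ i, (c i : ℝ) • α i) ∈ R →
        (∃ k : ℤ, ⟪y, ∑ i, (c i : ℝ) • α i⟫ = d * k) →
        (∑ i, (c i : ℝ) • α i) ∈ AddSubgroup.closure (affRoot α h '' {i | i ∉ J}) := by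
      intro c hc ⟨k, hk⟩
      have hcle : ∀ i, c i ≤ h i := by
        intro i
        have h1 := (hh i).2 ⟨_, hc, rfl⟩
        simp only [inner_sum, inner_smul_right, hϖ] at h1
        simpa using h1
      rw [hyin] at hk
      have hk' : ((∑ i, X i.succ * c i : ℕ) : ℤ) = d * k := by exact_mod_cast hk
      set s := ∑ i, X i.succ * c i with hs
      have hgen : ∀ i : Fin n, X i.succ = 0 →
          α i ∈ AddSubgroup.closure (affRoot α h '' {i | i ∉ J}) := by
        intro i hi
        refine AddSubgroup.subset_closure ⟨i.succ, ?_, by simp [affRoot, ext0]⟩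
        rw [Set.mem_ofPred_eq, ← hX]
        simpa using hi
      have hsle : s ≤ ∑ i : Fin n, X i.succ * h i :=
        Finset.sum_le_sum fun i _ => Nat.mul_le_mul_left _ (hcle i)
      have hcomb : ∀ e : Fin n → ℕ, (∀ i, X i.succ ≠ 0 → e i = 0) →
          (∑ i, (e i : ℝ) • α i) ∈ AddSubgroup.closure (affRoot α h '' {i | i ∉ J}) := by
        intro e he
        refine AddSubgroup.sum_mem _ fun i _ => ?_
        by_cases hXi : X i.succ = 0
        · rw [Nat.cast_smul_eq_nsmul]
          exact AddSubgroup.nsmul_mem _ (hgen i hXi) _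
        · rw [he i hXi]; simp
      by_cases hs0 : s = 0
      · refine hcomb c fun i hXi => ?_
        have := Finset.sum_eq_zero_iff.1 (hs ▸ hs0) i (Finset.mem_univ i)
        rcases Nat.mul_eq_zero.1 this with h | h
        · exact absurd h hXi
        · exact h
      · have hdd : d ∣ s := by
          have : (d : ℤ) ∣ (s : ℤ) := ⟨k, hk'⟩
          exact_mod_cast this
        have hds : d ≤ s := Nat.le_of_dvd (Nat.pos_of_ne_zero hs0) hdd
        have hX0 : X 0 = 0 := by omega
        have hseq : s = ∑ i : Fin n, X i.succ * h i := by omega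
        have heq : ∀ i, X i.succ * c i = X i.succ * h i := by
          have := (Finset.sum_eq_sum_iff_of_le (s := Finset.univ)
            (f := fun i : Fin n => X i.succ * c i) (g := fun i : Fin n => X i.succ * h i)
            fun i _ => Nat.mul_le_mul_left _ (hcle i)).1 hseq
          exact fun i => this i (Finset.mem_univ i)
        have h0 : -(∑ i, (h i : ℝ) • α i) ∈
            AddSubgroup.closure (affRoot α h '' {i | i ∉ J}) := by
          refine AddSubgroup.subset_closure ⟨0, ?_, by simp [affRoot, ext0]⟩
          rw [Set.mem_ofPred_eq, ← hX]
          simpa using hX0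
        have h1 := hcomb (fun i => h i - c i) (by
          intro i hXi
          have := Nat.eq_of_mul_eq_mul_left (Nat.pos_of_ne_zero hXi) (heq i)
          simp [this])
        have h2 := AddSubgroup.neg_mem _ (AddSubgroup.add_mem _ h0 h1)
        convert h2 using 1
        rw [← Finset.sum_neg_distrib, ← Finset.sum_add_distrib, ← Finset.sum_neg_distrib]
        refine Finset.sum_congr rfl fun i _ => ?_
        rw [Nat.cast_sub (hcle i)]
        module
    rintro ⟨k, hk⟩
    refine ⟨hβ, ?_⟩
    rcases hpos β hβ with ⟨c, rfl⟩ | ⟨c, rfl⟩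
    · exact main c hβ ⟨k, hk⟩
    · refine AddSubgroup.neg_mem _ (main c ?_ ⟨-k, ?_⟩)
      · simpa using neg_mem hADE hβ
      · rw [inner_neg_right] at hk
        push_cast
        linarith
  · rintro ⟨-, hcl⟩
    clear hβ
    induction hcl using AddSubgroup.closure_induction with
    | mem x hx =>
      obtain ⟨j, hj, rfl⟩ := hx
      have hj0 : X j = 0 := by
        by_contra hne
        exact hj ((hX j).1 hne)
      induction j using Fin.cases with
      | zero =>
        refine ⟨-1, ?_⟩
        have : affRoot α h 0 = -(∑ i, (h i : ℝ) • α i) := by simp [affRoot, ext0]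
        rw [this, inner_neg_right, hyin, ← hsum', hj0]
        push_cast
        ring
      | succ i =>
        refine ⟨0, ?_⟩
        have : affRoot α h i.succ = α i := by simp [affRoot, ext0]
        rw [this, hy, hj0]
        simp
    | zero => exact ⟨0, by simp⟩
    | add a b _ _ ha hb =>
      obtain ⟨k, hk⟩ := ha
      obtain ⟨l, hl⟩ := hb
      exact ⟨k + l, by rw [inner_add_right, hk, hl]; push_cast; ring⟩
    | neg x _ hx =>
      obtain ⟨k, hk⟩ := hx
      exact ⟨-k, by rw [inner_neg_right, hk]; push_cast; ring⟩

lemma exists_hom {R : Set V} {y : V} (d : ℕ) (hy : ∀ β ∈ R, ∃ k : ℤ, ⟪y, β⟫ = (k : ℝ)) :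
    ∃ φ : ↥(AddSubgroup.closure R) →+ ZMod d, ∀ (v : V) (hv : v ∈ AddSubgroup.closure R) (k : ℤ),
      ⟪y, v⟫ = (k : ℝ) → φ ⟨v, hv⟩ = (k : ZMod d) := by
  refine ⟨AddMonoidHom.mk' (fun v => ((⌊⟪y, (v : V)⟫⌋ : ℤ) : ZMod d)) ?_, ?_⟩
  · rintro ⟨a, ha⟩ ⟨b, hb⟩
    obtain ⟨k, hk⟩ := closure_int hy ha
    obtain ⟨l, hl⟩ := closure_int hy hb
    have : ⟪y, a + b⟫ = ((k + l : ℤ) : ℝ) := by rw [inner_add_right, hk, hl]; push_cast; ring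
    simp only [AddSubgroup.coe_add, this, hk, hl, Int.floor_intCast]
    push_cast
    rfl
  · intro v hv k hk
    simp [hk]

lemma cast_eq_zero {d : ℕ} {m : ℤ} : ((m : ℤ) : ZMod d) = 0 ↔ ∃ k : ℤ, (m : ℝ) = d * k := by
  rw [ZMod.intCast_zmod_eq_zero_iff_dvd]
  constructor
  · rintro ⟨k, rfl⟩
    exact ⟨k, by push_cast; ring⟩
  · rintro ⟨k, hk⟩
    exact ⟨k, by exact_mod_cast hk⟩

end DKer

open DKer

/-- **Proposition (classification of the `d`-kernels of an irreducible ADE root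
system)**. With the classical affine setup (simple roots `α_i`, fundamental weights
`ϖ_i`, heights `h_i`, `α_0 = -α̃`, `h_0 = 1`, `I = {0,…,n}`), the `d`-kernels of `R` are
exactly the `w(R_J)` with `w ∈ W(R)` and `J ⊆ I` such that there exist integers `x_j > 0`
(`j ∈ J`) with `Σ_{j∈J} x_j h_j = d` and `gcd(d, {x_j : j ∈ J}) = 1`. -/
theorem classification_d_kernels {n : ℕ} (R : Set V)
    (hADE : IsADE R) (hirr : IsIrreducibleRS R)
    (hrank : Module.finrank ℝ (Submodule.span ℝ R) = n)
    (α : Fin n → V) (hαR : ∀ i, α i ∈ R)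
    (hli : LinearIndependent ℝ α)
    (hspan : R ⊆ (Submodule.span ℝ (Set.range α) : Set V))
    (hpos : ∀ β ∈ R, (∃ c : Fin n → ℕ, β = ∑ i, (c i : ℝ) • α i) ∨
      (∃ c : Fin n → ℕ, β = -(∑ i, (c i : ℝ) • α i)))
    (ϖ : Fin n → V) (hϖ : ∀ i j, ⟪ϖ i, α j⟫ = if i = j then 1 else 0)
    (h : Fin n → ℕ) (hh : ∀ i, IsGreatest ((fun β => ⟪ϖ i, β⟫) '' R) ((h i : ℝ)))
    (hhighest : (∑ i, (h i : ℝ) • α i) ∈ R)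
    (d : ℕ) (hd : 1 ≤ d) :
    ∀ R' : Set V, IsDKernelOfRS d R R' ↔
      ∃ w ∈ WeylGrp R, ∃ J : Finset (Fin (n + 1)),
        (∃ xc : Fin (n + 1) → ℕ, (∀ j ∈ J, 0 < xc j) ∧
          (∑ j ∈ J, xc j * ext0 1 h j) = d ∧ Nat.gcd d (J.gcd xc) = 1) ∧
        R' = (fun v => w v) '' RJ R α h J := by
  intro R'
  have hmemR : ∀ v : V, v ∈ AddSubgroup.closure R → ⟪v, v⟫ = 2 → v ∈ R := by
    intro v hv hv2
    obtain ⟨c, rfl⟩ := root_coords hpos hv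
    exact norm_two_mem hADE hαR _ c le_rfl hv2
  have hαQ : ∀ i, α i ∈ AddSubgroup.closure R := fun i => AddSubgroup.subset_closure (hαR i)
  have hwin : ∀ a : Fin n → ℤ, ∀ i, ⟪∑ j, (a j : ℝ) • ϖ j, α i⟫ = a i := by
    intro a i
    simp [sum_inner, real_inner_smul_left, hϖ]
  have hInt : ∀ y : V, (∀ i, ∃ k : ℤ, ⟪y, α i⟫ = (k : ℝ)) →
      ∀ β ∈ R, ∃ k : ℤ, ⟪y, β⟫ = (k : ℝ) := by
    intro y hy β hβ
    choose m hm using hy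
    obtain ⟨c, rfl⟩ := root_coords hpos (AddSubgroup.subset_closure hβ)
    refine ⟨∑ i, c i * m i, ?_⟩
    simp [inner_sum, inner_smul_right, hm]
  constructor
  · rintro ⟨φ, hsurj, rfl⟩
    -- lift `φ` to a weight
    choose a ha using fun i => ZMod.intCast_surjective (φ ⟨α i, hαQ i⟩)
    set y : V := ∑ j, (a j : ℝ) • ϖ j with hydef
    have hyα : ∀ i, ⟪y, α i⟫ = a i := hwin a
    have hφ : ∀ (v : V) (hv : v ∈ AddSubgroup.closure R), ∃ m : ℤ, ⟪y, v⟫ = (m : ℝ) ∧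
        φ ⟨v, hv⟩ = (m : ZMod d) := by
      intro v hv
      obtain ⟨c, hc⟩ := root_coords hpos hv
      refine ⟨∑ i, c i * a i, ?_, ?_⟩
      · rw [hc]
        simp [inner_sum, inner_smul_right, hyα]
      · have : (⟨v, hv⟩ : AddSubgroup.closure R) = ∑ i, c i • ⟨α i, hαQ i⟩ := by
          apply Subtype.ext
          refine hc.trans ?_
          simp [Int.cast_smul_eq_zsmul]
        rw [this, map_sum]
        simp [ha]
    have hyint := hInt y fun i => ⟨a i, hyα i⟩
    obtain ⟨N, hN⟩ := exists_nat_gt ⟪y, y⟫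
    obtain ⟨z, hz1, hz2⟩ := step_translate hADE d hd N y hyint hN
    have hzint : ∀ β ∈ R, ∃ k : ℤ, ⟪z, β⟫ = (k : ℝ) := by
      intro β hβ
      obtain ⟨k, hk⟩ := hyint β hβ
      obtain ⟨l, hl⟩ := hz2 β hβ
      exact ⟨k + d * l, by rw [hl, hk]; push_cast; ring⟩
    obtain ⟨M, hM⟩ := exists_nat_gt (‖z‖ * ‖∑ j, ϖ j‖ - ⟪z, ∑ j, ϖ j⟫)
    obtain ⟨w, hw, hwz⟩ := step_weyl hADE hαR (∑ j, ϖ j)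
      (fun i => by simp [sum_inner, hϖ]) M z hzint hM
    have hwi : ∀ v, w (w⁻¹ v) = v := fun v => LinearIsometryEquiv.apply_symm_apply w v
    have hpair : ∀ v, ⟪w z, v⟫ = ⟪z, w⁻¹ v⟫ := by
      intro v
      rw [← LinearIsometryEquiv.inner_map_map w z, hwi]
    have hwinv : ∀ β ∈ R, w⁻¹ β ∈ R := fun β hβ => (weyl_root hADE (inv_mem hw) β).2 hβ
    have hnat : ∀ i, ∃ k : ℕ, ⟪w z, α i⟫ = (k : ℝ) := by
      intro i
      obtain ⟨k, hk⟩ := hzint _ (hwinv _ (hαR i))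
      rw [← hpair] at hk
      have h0 := hwz i
      rw [hk] at h0
      have h0' : 0 ≤ k := by exact_mod_cast h0
      exact ⟨k.toNat, by rw [hk]; exact_mod_cast (Int.toNat_of_nonneg h0').symm⟩
    choose x hx using hnat
    have hxle : ∑ i, x i * h i ≤ d := by
      have h1 := hz1 _ (hwinv _ hhighest)
      rw [← hpair, inner_sum] at h1
      simp only [inner_smul_right, hx] at h1
      have h2 : ∑ i, h i * x i ≤ d := by exact_mod_cast h1
      simpa [mul_comm] using h2
    let X : Fin (n + 1) → ℕ := Fin.cases (d - ∑ i, x i * h i) x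
    have hXs : ∀ i : Fin n, X i.succ = x i := fun i => rfl
    have hX0 : X 0 = d - ∑ i, x i * h i := rfl
    have hsum : ∑ j, X j * ext0 1 h j = d := by
      rw [Fin.sum_univ_succ]
      simp only [hXs, hX0, ext0, Fin.cases_zero, Fin.cases_succ, mul_one]
      omega
    let J : Finset (Fin (n + 1)) := Finset.univ.filter fun j => X j ≠ 0
    have hJ : ∀ j, X j ≠ 0 ↔ j ∈ J := fun j => by simp [J]
    have hker : ∀ β ∈ R, ((∃ k : ℤ, ⟪w z, β⟫ = d * k) ↔ β ∈ RJ R α h J) := fun β hβ =>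
      alcove_kernel hpos hϖ hh hADE hJ hsum (fun i => by rw [hx, hXs]) hβ
    refine ⟨w⁻¹, inv_mem hw, J, ⟨X, fun j hj => Nat.pos_of_ne_zero ((hJ j).2 hj), ?_, ?_⟩, ?_⟩
    · rw [← hsum]
      refine Finset.sum_subset (Finset.subset_univ _) fun j _ hj => ?_
      have : X j = 0 := by
        by_contra hne
        exact hj ((hJ j).1 hne)
      simp [this]
    · set g := Nat.gcd d (J.gcd X) with hg
      have hgd : g ∣ d := Nat.gcd_dvd_left _ _
      have hgX : ∀ j, g ∣ X j := by
        intro j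
        by_cases hj : j ∈ J
        · exact (Nat.gcd_dvd_right _ _).trans (Finset.gcd_dvd hj)
        · have : X j = 0 := by
            by_contra hne
            exact hj ((hJ j).1 hne)
          simp [this]
      have hroot : ∀ (β : V) (hβ : β ∈ R), ∃ k : ℤ,
          φ ⟨β, AddSubgroup.subset_closure hβ⟩ = ((g * k : ℤ) : ZMod d) := by
        intro β hβ
        obtain ⟨m, hm1, hm2⟩ := hφ β (AddSubgroup.subset_closure hβ)
        obtain ⟨l, hl⟩ := hz2 β hβ
        have hwβ : w β ∈ R := (weyl_root hADE hw β).2 hβ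
        obtain ⟨c, hc⟩ := root_coords hpos (AddSubgroup.subset_closure hwβ)
        have h1 : ⟪w z, w β⟫ = ((∑ i, c i * x i : ℤ) : ℝ) := by
          rw [hc]
          simp [inner_sum, inner_smul_right, hx]
        rw [LinearIsometryEquiv.inner_map_map, hl, hm1] at h1
        have h2 : m + d * l = ∑ i, c i * (x i : ℤ) := by exact_mod_cast h1
        have h3 : (g : ℤ) ∣ ∑ i, c i * (x i : ℤ) :=
          Finset.dvd_sum fun i _ => Dvd.dvd.mul_left (by exact_mod_cast hgX i.succ) _
        have h4 : (g : ℤ) ∣ d * l := Dvd.dvd.mul_right (by exact_mod_cast hgd) _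
        rw [← h2] at h3
        obtain ⟨k, hk⟩ := (dvd_add_left h4).1 h3
        exact ⟨k, by rw [hm2, hk]⟩
      have hall : ∀ (v : V) (hv : v ∈ AddSubgroup.closure R), ∃ k : ℤ,
          φ ⟨v, hv⟩ = ((g * k : ℤ) : ZMod d) := by
        intro v hv
        induction hv using AddSubgroup.closure_induction with
        | mem x hx => exact hroot x hx
        | zero => exact ⟨0, by
            have : (⟨0, AddSubgroup.zero_mem _⟩ : AddSubgroup.closure R) = 0 := rfl
            simp [this]⟩
        | add a b ha hb h1 h2 =>
          obtain ⟨k, hk⟩ := h1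
          obtain ⟨l, hl⟩ := h2
          refine ⟨k + l, ?_⟩
          have : (⟨a + b, AddSubgroup.add_mem _ ha hb⟩ : AddSubgroup.closure R) =
            ⟨a, ha⟩ + ⟨b, hb⟩ := rfl
          rw [this, map_add, hk, hl]
          push_cast
          ring
        | neg a ha h1 =>
          obtain ⟨k, hk⟩ := h1
          refine ⟨-k, ?_⟩
          have : (⟨-a, AddSubgroup.neg_mem _ ha⟩ : AddSubgroup.closure R) = -⟨a, ha⟩ := rfl
          rw [this, map_neg, hk]
          push_cast
          ring
      obtain ⟨⟨v, hv⟩, hv1⟩ := hsurj 1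
      obtain ⟨k, hk⟩ := hall v hv
      rw [hv1] at hk
      have h5 : ((g * k - 1 : ℤ) : ZMod d) = 0 := by
        rw [Int.cast_sub, ← hk]; simp
      rw [ZMod.intCast_zmod_eq_zero_iff_dvd] at h5
      have h6 : (g : ℤ) ∣ g * k - 1 := dvd_trans (by exact_mod_cast hgd) h5
      have h7 : (g : ℤ) ∣ 1 := by
        have := dvd_sub (dvd_mul_right (g : ℤ) k) h6
        simpa using this
      exact Nat.dvd_one.1 (by exact_mod_cast h7)
    · ext v
      have key : ∀ β (hβ : β ∈ R), φ ⟨β, AddSubgroup.subset_closure hβ⟩ = 0 ↔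
          w β ∈ RJ R α h J := by
        intro β hβ
        obtain ⟨m, hm1, hm2⟩ := hφ β (AddSubgroup.subset_closure hβ)
        obtain ⟨l, hl⟩ := hz2 β hβ
        rw [hm2, cast_eq_zero, ← hker _ ((weyl_root hADE hw β).2 hβ),
          LinearIsometryEquiv.inner_map_map, hl, hm1]
        constructor
        · rintro ⟨k, hk⟩
          exact ⟨k + l, by rw [hk]; push_cast; ring⟩
        · rintro ⟨k, hk⟩
          exact ⟨k - l, by push_cast; linarith⟩
      constructor
      · rintro ⟨hv, h0, h2⟩
        have hvR := hmemR v hv h2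
        exact ⟨w v, (key v hvR).1 h0, LinearIsometryEquiv.symm_apply_apply w v⟩
      · rintro ⟨u, hu, rfl⟩
        have hvR : w⁻¹ u ∈ R := hwinv u hu.1
        refine ⟨AddSubgroup.subset_closure hvR, (key _ hvR).2 ?_, hADE.2.1 _ hvR⟩
        rwa [hwi]
  · rintro ⟨w, hw, J, ⟨xc, hxpos, hxsum, hxgcd⟩, rfl⟩
    let X : Fin (n + 1) → ℕ := fun j => if j ∈ J then xc j else 0
    have hX : ∀ j, X j ≠ 0 ↔ j ∈ J := by
      intro j
      by_cases hj : j ∈ J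
      · simp [X, hj, (hxpos j hj).ne']
      · simp [X, hj]
    have hsum : ∑ j, X j * ext0 1 h j = d := by
      rw [← hxsum]
      simp [X, ite_mul, Finset.sum_ite_mem]
    set y : V := ∑ i : Fin n, ((X i.succ : ℤ) : ℝ) • ϖ i with hydef
    have hyα : ∀ i : Fin n, ⟪y, α i⟫ = X i.succ := by
      intro i
      have := hwin (fun i => (X i.succ : ℤ)) i
      rw [← hydef] at this
      simpa using this
    have hyint := hInt y fun i => ⟨X i.succ, by rw [hyα]; simp⟩
    have hwi : ∀ v, w (w⁻¹ v) = v := fun v => LinearIsometryEquiv.apply_symm_apply w v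
    have hwinv : ∀ β ∈ R, w⁻¹ β ∈ R := fun β hβ => (weyl_root hADE (inv_mem hw) β).2 hβ
    have hpair : ∀ v, ⟪w y, v⟫ = ⟪y, w⁻¹ v⟫ := by
      intro v
      rw [← LinearIsometryEquiv.inner_map_map w y, hwi]
    have hwyint : ∀ β ∈ R, ∃ k : ℤ, ⟪w y, β⟫ = (k : ℝ) := by
      intro β hβ
      rw [hpair]
      exact hyint _ (hwinv β hβ)
    obtain ⟨φ, hφ⟩ := exists_hom d hwyint
    refine ⟨φ, ?_, ?_⟩
    · -- surjectivity
      let S : AddSubgroup ℤ := φ.range.comap (Int.castAddHom (ZMod d))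
      have hmemS : ∀ m : ℤ, m ∈ S ↔ ∃ v, φ v = (m : ZMod d) := fun m => Iff.rfl
      have hwR : ∀ β ∈ R, w β ∈ AddSubgroup.closure R := fun β hβ =>
        AddSubgroup.subset_closure ((weyl_root hADE hw β).2 hβ)
      have hdS : (d : ℤ) ∈ S := (hmemS _).2 ⟨0, by simp⟩
      have hXS : ∀ i : Fin n, (X i.succ : ℤ) ∈ S := fun i => (hmemS _).2
        ⟨⟨w (α i), hwR _ (hαR i)⟩, hφ _ _ _ (by
          rw [LinearIsometryEquiv.inner_map_map, hyα]; simp)⟩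
      have hsum' : X 0 + ∑ i : Fin n, X i.succ * h i = d := by
        rw [Fin.sum_univ_succ] at hsum
        simpa [ext0] using hsum
      have hX0S : (X 0 : ℤ) ∈ S := by
        have : (X 0 : ℤ) = d - ∑ i : Fin n, (h i) • (X i.succ : ℤ) := by
          rw [← hsum']
          simp [mul_comm]
        rw [this]
        exact S.sub_mem hdS (S.sum_mem fun i _ => S.nsmul_mem (hXS i) _)
      have hXall : ∀ j, (X j : ℤ) ∈ S := fun j => Fin.cases hX0S hXS j
      obtain ⟨g, hg⟩ := Int.subgroup_cyclic S
      have hdvd : ∀ m ∈ S, g ∣ m := by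
        intro m hm
        rw [hg, AddSubgroup.mem_closure_singleton] at hm
        obtain ⟨k, rfl⟩ := hm
        simp
      have h1 : g.natAbs ∣ d := Int.natAbs_dvd_natAbs.2 (hdvd _ hdS)
      have h2 : g.natAbs ∣ J.gcd xc := by
        refine Finset.dvd_gcd fun j hj => ?_
        have h3 : g.natAbs ∣ X j := Int.natAbs_dvd_natAbs.2 (hdvd _ (hXall j))
        simpa [X, hj] using h3
      have h3 : g.natAbs = 1 := Nat.dvd_one.1 (hxgcd ▸ Nat.dvd_gcd h1 h2)
      have hgS : g ∈ S := by rw [hg]; exact AddSubgroup.subset_closure rfl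
      have h1S : (1 : ℤ) ∈ S := by
        rcases Int.natAbs_eq g with h4 | h4 <;> rw [h3] at h4
        · rw [h4] at hgS
          simpa using hgS
        · rw [h4] at hgS
          simpa using S.neg_mem hgS
      intro t
      obtain ⟨m, rfl⟩ := ZMod.intCast_surjective t
      have : m ∈ S := by simpa using S.zsmul_mem h1S m
      exact (hmemS m).1 this
    · ext v
      have key : ∀ β (hβ : β ∈ R), φ ⟨β, AddSubgroup.subset_closure hβ⟩ = 0 ↔
          w⁻¹ β ∈ RJ R α h J := by
        intro β hβ
        obtain ⟨m, hm⟩ := hwyint β hβ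
        rw [hφ β _ m hm, cast_eq_zero, ← hm, hpair]
        exact alcove_kernel hpos hϖ hh hADE hX hsum hyα (hwinv β hβ)
      constructor
      · rintro ⟨hv, h0, h2⟩
        have hvR := hmemR v hv h2
        exact ⟨w⁻¹ v, (key v hvR).1 h0, hwi v⟩
      · rintro ⟨u, hu, rfl⟩
        have hvR : w u ∈ R := (weyl_root hADE hw u).2 hu.1
        refine ⟨AddSubgroup.subset_closure hvR, (key _ hvR).2 ?_, hADE.2.1 _ hvR⟩
        have : w⁻¹ (w u) = u := LinearIsometryEquiv.symm_apply_apply w u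
        rwa [this]


end
end
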